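/- arXiv:2504.02428 — 13 statements merged into one kernel-verified Lean document; each statement's English description precedes it below -/
import Mathlib

section
/- Every DSC semigroup is simple; that is, if S is a semigroup in which every diagonal subsemigroup of S × S is a congruence, then the only two-sided ideal of S is S itself. -/
/-- A semigroup is DSC if every subsemigroup of `S × S` containing the
diagonal is symmetric and transitive, i.e. a congruence. -/
def IsDSC (S : Type*) [Mul S] : Prop :=
  ∀ ρ : Set (S × S),
    (∀ x : S, (x, x) ∈ ρ) →
    (∀ p q : S × S, p ∈ ρ → q ∈ ρ → p * q ∈ ρ) →
    ((∀ x y : S, ((x, y) : S × S) ∈ ρ → ((y, x) : S × S) ∈ ρ) ∧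
     (∀ x y z : S, ((x, y) : S × S) ∈ ρ → ((y, z) : S × S) ∈ ρ →
        ((x, z) : S × S) ∈ ρ))

theorem eq_univ_of_isSymm_diagonal_union_prod_univ {α : Type*} {s : Set α} (hs : s.Nonempty)
    (hsymm : SetRel.IsSymm (Set.diagonal α ∪ s ×ˢ Set.univ)) : s = Set.univ := by
  obtain ⟨x, hx⟩ := hs
  refine Set.eq_univ_of_forall fun y ↦ ?_
  have hxy : (x, y) ∈ Set.diagonal α ∪ s ×ˢ Set.univ := Or.inr ⟨hx, trivial⟩
  rcases hsymm.symm x y hxy with hyx | ⟨hy, -⟩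
  · obtain rfl : y = x := hyx
    exact hx
  · exact hy

section Mul

variable {S : Type*} [Mul S]

theorem IsDSC.isSymm_of_diagonal_subset (h : IsDSC S) (ρ : Subsemigroup (S × S))
    (hρ : Set.diagonal S ⊆ ρ) : SetRel.IsSymm (ρ : Set (S × S)) where
  symm := (h ρ (fun _ ↦ hρ rfl) fun _ _ ↦ ρ.mul_mem).1

/-- The diagonal subsemigroup `Δ ∪ (I × S)` of `S × S` attached to a two-sided ideal `I` of `S`
(possibly empty). Unlike the Rees congruence `Δ ∪ (I × I)`, it is symmetric only when `I` is empty
or all of `S`. -/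
def diagonalUnionProdUniv (I : Set S) (hI : ∀ x ∈ I, ∀ s : S, s * x ∈ I ∧ x * s ∈ I) :
    Subsemigroup (S × S) where
  carrier := Set.diagonal S ∪ I ×ˢ Set.univ
  mul_mem' := by
    rintro ⟨a, b⟩ ⟨c, d⟩ (hab | ⟨ha, -⟩) (hcd | ⟨hc, -⟩)
    · exact Or.inl (congrArg₂ (· * ·) hab hcd)
    · exact Or.inr ⟨(hI c hc a).1, trivial⟩
    all_goals exact Or.inr ⟨(hI a ha c).2, trivial⟩

theorem DSC_simple_general
    (h : ∀ ρ : Subsemigroup (S × S), Set.diagonal S ⊆ ρ → SetRel.IsSymm (ρ : Set (S × S)))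
    (I : Set S) (hne : I.Nonempty)
    (hI : ∀ x ∈ I, ∀ s : S, s * x ∈ I ∧ x * s ∈ I) :
    I = Set.univ :=
  eq_univ_of_isSymm_diagonal_union_prod_univ hne
    (h (diagonalUnionProdUniv I hI) Set.subset_union_left)

end Mul

/-- every DSC semigroup is simple: the only (two-sided) ideal of
`S` is `S` itself. -/
theorem DSC_simple {S : Type*} [Semigroup S] (h : IsDSC S)
    (I : Set S) (hne : I.Nonempty)
    (hI : ∀ x ∈ I, ∀ s : S, s * x ∈ I ∧ x * s ∈ I) :
    I = Set.univ :=
  DSC_simple_general h.isSymm_of_diagonal_subset I hne hI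
end

section
/- Let G be a group, let I and J be nonempty index sets, and let P = (p_{ji}) be a J × I matrix with entries in G. If the Rees matrix semigroup M[G;I,J;P] is DSC, then I and J are both singletons (so that M[G;I,J;P] is isomorphic to the group G). -/
/-- DSC property for a multiplication given explicitly as a function: every
subset of `S × S` containing the diagonal and closed under the (coordinatewise)
multiplication is symmetric and transitive, i.e. a congruence. -/
def IsDSCOf {S : Type*} (mul : S → S → S) : Prop :=
  ∀ ρ : Set (S × S),
    (∀ x : S, (x, x) ∈ ρ) →
    (∀ p q : S × S, p ∈ ρ → q ∈ ρ → (mul p.1 q.1, mul p.2 q.2) ∈ ρ) →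
    ((∀ x y : S, ((x, y) : S × S) ∈ ρ → ((y, x) : S × S) ∈ ρ) ∧
     (∀ x y z : S, ((x, y) : S × S) ∈ ρ → ((y, z) : S × S) ∈ ρ →
        ((x, z) : S × S) ∈ ρ))

/-- Multiplication of the Rees matrix semigroup `M[G; I, J; P]`:
`(i, g, j)(k, h, l) = (i, g * p_{j k} * h, l)`. -/
def reesMul {G I J : Type*} [Group G] (P : J → I → G) :
    I × G × J → I × G × J → I × G × J :=
  fun x y => (x.1, x.2.1 * P x.2.2 y.1 * y.2.1, y.2.2)

/-!
The maps `(i, g, j) ↦ i` and `(i, g, j) ↦ j` are homomorphisms onto the left zero semigroup on `I`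
and the right zero semigroup on `J`. The DSC property passes to homomorphic images, and in a left
or right zero semigroup every reflexive relation is a diagonal subsemigroup, so DSC forces every
reflexive relation to be symmetric, which is possible only on a set with at most one element.
-/

namespace IsDSCOf

variable {S T : Type*}

theorem of_surjective {mulS : S → S → S} {mulT : T → T → T} (h : IsDSCOf mulS) {f : S → T}
    (hf : Function.Surjective f) (map_mul : ∀ x y, f (mulS x y) = mulT (f x) (f y)) :
    IsDSCOf mulT := by
  intro ρ diag_mem mul_mem
  obtain ⟨symm, trans⟩ := h (Prod.map f f ⁻¹' ρ) (fun x => diag_mem (f x)) fun p q hp hq => by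
    simpa only [Set.mem_preimage, Prod.map, map_mul] using mul_mem _ _ hp hq
  exact ⟨hf.forall₂.2 symm, hf.forall₃.2 trans⟩

protected theorem flip {mul : S → S → S} (h : IsDSCOf mul) : IsDSCOf (flip mul) :=
  fun ρ diag_mem mul_mem => h ρ diag_mem fun p q hp hq => mul_mem q p hq hp

theorem subsingleton_of_left_zero (h : IsDSCOf fun x _ : S => x) : Subsingleton S := by
  refine ⟨fun a b => ?_⟩
  obtain ⟨symm, -⟩ := h {p | p.1 = p.2 ∨ p.1 = a} (fun _ => Or.inl rfl) fun _ _ hp _ => hp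
  have mem_swap : b = a ∨ b = a := symm a b (Or.inr rfl)
  exact (or_self_iff.1 mem_swap).symm

theorem subsingleton_of_right_zero (h : IsDSCOf fun _ y : S => y) : Subsingleton S :=
  subsingleton_of_left_zero h.flip

end IsDSCOf

theorem rees_DSC_singleton_general {G I J : Type*} [Mul G] [Nonempty I] [Nonempty J]
    (P : J → I → G)
    (h : IsDSCOf fun x y : I × G × J => (x.1, x.2.1 * P x.2.2 y.1 * y.2.1, y.2.2)) :
    Subsingleton I ∧ Subsingleton J := by
  have : Nonempty G := Nonempty.map2 P ‹_› ‹_›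
  have left_zero : IsDSCOf fun i _ : I => i :=
    h.of_surjective Prod.fst_surjective fun _ _ => rfl
  have right_zero : IsDSCOf fun _ j : J => j :=
    h.of_surjective (Prod.snd_surjective.comp Prod.snd_surjective) fun _ _ => rfl
  exact ⟨left_zero.subsingleton_of_left_zero, right_zero.subsingleton_of_right_zero⟩

/-- if the Rees matrix semigroup `M[G; I, J; P]` over a group `G`
is DSC, then `I` and `J` are both singletons. -/
theorem rees_DSC_singleton {G I J : Type*} [Group G] [Nonempty I] [Nonempty J]
    (P : J → I → G) (h : IsDSCOf (reesMul P)) :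
    Subsingleton I ∧ Subsingleton J :=
  rees_DSC_singleton_general P h
end

section
/- Let S be a completely simple semigroup. If S is DSC, then S is a group; that is, S has an identity element and every element of S has a two-sided inverse. -/
/-- A semigroup is a group if it has a (two-sided) identity element with
respect to which every element has a two-sided inverse. -/
def IsGroupSG (S : Type*) [Mul S] : Prop :=
  ∃ e : S, (∀ s : S, e * s = s ∧ s * e = s) ∧
    ∀ s : S, ∃ t : S, s * t = e ∧ t * s = e

/-!
If `e` is a primitive idempotent of a simple semigroup `S`, then `e * S` is a minimal right ideal,
and `S * e * S = S` makes `x` lie in `x * y * S` for all `x` and `y`. So `x * y` lies in a given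
right ideal `a * S` if and only if `x` does. For any set `A` with this last property, the pairs
`(x, y)` such that `y ∈ A` implies `x ∈ A` form a diagonal subsemigroup, and if `A` is nonempty
then symmetry of this subsemigroup forces `A` to be all of `S`. Hence
`a * S = S`, and dually `S * a = S`, for every `a`: division is possible on both sides, and `S` is
a group.
-/

open MulOpposite

/-- A semigroup is simple if it is its only two-sided ideal. -/
def IsSimpleSemigroup (S : Type*) [Mul S] : Prop :=
  ∀ I : Set S, I.Nonempty → (∀ x ∈ I, ∀ s : S, s * x ∈ I ∧ x * s ∈ I) → I = Set.univ

/-- A primitive idempotent: one that is minimal for the order in which `f ≤ e` means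
`e * f = f` and `f * e = f`. -/
def IsPrimitiveIdempotent {S : Type*} [Mul S] (e : S) : Prop :=
  e * e = e ∧ ∀ f : S, f * f = f → e * f = f → f * e = f → f = e

/-- The half of the DSC property that makes a completely simple semigroup a group: every diagonal
subsemigroup of `S × S` is symmetric. -/
def IsDiagonalSymmetric (S : Type*) [Mul S] : Prop :=
  ∀ ρ : Subsemigroup (S × S), (∀ x, (x, x) ∈ ρ) → ∀ x y, (x, y) ∈ ρ → (y, x) ∈ ρ

section Mul

variable {S : Type*} [Mul S]

theorem IsSimpleSemigroup.op (hS : IsSimpleSemigroup S) : IsSimpleSemigroup Sᵐᵒᵖ := by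
  intro I ⟨x, hx⟩ hI
  have hpre : MulOpposite.op ⁻¹' I = Set.univ :=
    hS _ ⟨x.unop, hx⟩ fun y hy s => (hI (.op y) hy (.op s)).symm
  exact Set.eq_univ_of_forall fun y => Set.eq_univ_iff_forall.mp hpre y.unop

theorem IsPrimitiveIdempotent.op {e : S} (he : IsPrimitiveIdempotent e) :
    IsPrimitiveIdempotent (op e) :=
  ⟨congrArg MulOpposite.op he.1, fun f hff hef hfe => unop_injective <|
    he.2 f.unop (congrArg unop hff) (congrArg unop hfe) (congrArg unop hef)⟩

theorem IsDiagonalSymmetric.op (hS : IsDiagonalSymmetric S) : IsDiagonalSymmetric Sᵐᵒᵖ := by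
  intro ρ hdiag x y hxy
  let ρ' : Subsemigroup (S × S) :=
    { carrier := {p | (MulOpposite.op p.1, MulOpposite.op p.2) ∈ ρ}
      mul_mem' := fun hp hq => ρ.mul_mem hq hp }
  exact hS ρ' (fun z => hdiag (.op z)) x.unop y.unop hxy

theorem IsDSC.isDiagonalSymmetric (hS : IsDSC S) : IsDiagonalSymmetric S :=
  fun ρ hdiag => (hS ρ hdiag fun _ _ => ρ.mul_mem).1

theorem IsDiagonalSymmetric.eq_univ_of_mul_mem_iff (hS : IsDiagonalSymmetric S) {A : Set S}
    (hne : A.Nonempty) (hA : ∀ x y, x * y ∈ A ↔ x ∈ A) : A = Set.univ := by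
  obtain ⟨a, ha⟩ := hne
  let ρ : Subsemigroup (S × S) :=
    { carrier := {p | p.2 ∈ A → p.1 ∈ A}
      mul_mem' := fun {p q} hp _ hpq => (hA p.1 q.1).mpr (hp ((hA p.2 q.2).mp hpq)) }
  exact Set.eq_univ_of_forall fun y => hS ρ (fun _ => id) a y (fun _ => ha) ha

end Mul

section Semigroup

variable {S : Type*} [Semigroup S]

theorem isGroupSG_of_exists_mul_eq [Nonempty S] (hright : ∀ a b : S, ∃ x, a * x = b)
    (hleft : ∀ a b : S, ∃ x, x * a = b) : IsGroupSG S := by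
  obtain ⟨a⟩ := ‹Nonempty S›
  obtain ⟨e, hae⟩ := hright a a
  obtain ⟨f, hfa⟩ := hleft a a
  have mul_e (s : S) : s * e = s := by
    obtain ⟨x, rfl⟩ := hleft a s
    rw [mul_assoc, hae]
  have f_mul (s : S) : f * s = s := by
    obtain ⟨x, rfl⟩ := hright a s
    rw [← mul_assoc, hfa]
  obtain rfl : f = e := (mul_e f).symm.trans (f_mul e)
  refine ⟨f, fun s => ⟨f_mul s, mul_e s⟩, fun s => ?_⟩
  obtain ⟨t, hst⟩ := hright s f
  obtain ⟨r, hrs⟩ := hleft s f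
  have hrt : r = t := by
    calc
      r = r * (s * t) := by rw [hst, mul_e]
      _ = t := by rw [← mul_assoc, hrs, f_mul]
  exact ⟨t, hst, hrt ▸ hrs⟩

theorem IsSimpleSemigroup.exists_mul_mul_eq (hS : IsSimpleSemigroup S) (w c : S) :
    ∃ a b, a * w * b = c := by
  have huniv : {c | ∃ a b, a * w * b = c} = Set.univ := by
    refine hS _ ⟨w * w * w, w, w, rfl⟩ ?_
    rintro _ ⟨a, b, rfl⟩ s
    exact ⟨⟨s * a, b, by simp only [mul_assoc]⟩, ⟨a, b * s, by simp only [mul_assoc]⟩⟩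
  exact Set.eq_univ_iff_forall.mp huniv c

theorem IsPrimitiveIdempotent.mul_eq_of_mul_mul_eq {e w a b : S} (he : IsPrimitiveIdempotent e)
    (hew : e * w = w) (hab : a * w * b = e) : w * (b * e * a * e) = e := by
  obtain ⟨hee, hmin⟩ := he
  refine hmin _ ?_ ?_ ?_
  · calc
      w * (b * e * a * e) * (w * (b * e * a * e))
        = w * b * e * (a * (e * w) * b) * (e * a * e) := by simp only [mul_assoc]
      _ = w * b * (e * e * e) * a * e := by rw [hew, hab]; simp only [mul_assoc]
      _ = w * (b * e * a * e) := by rw [hee, hee]; simp only [mul_assoc]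
  · rw [← mul_assoc, hew]
  · simp only [mul_assoc, hee]

theorem IsSimpleSemigroup.exists_mul_mul_eq_left (hS : IsSimpleSemigroup S) {e : S}
    (he : IsPrimitiveIdempotent e) (x y : S) : ∃ s, x * y * s = x := by
  obtain ⟨p, q, hx⟩ := hS.exists_mul_mul_eq e x
  obtain ⟨a, b, hab⟩ := hS.exists_mul_mul_eq (e * q * y) e
  obtain ⟨t, ht⟩ : ∃ t, e * q * y * t = e :=
    ⟨_, he.mul_eq_of_mul_mul_eq (by simp only [← mul_assoc, he.1]) hab⟩
  refine ⟨t * q, ?_⟩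
  calc
    x * y * (t * q) = p * (e * q * y * t) * q := by simp only [← hx, mul_assoc]
    _ = x := by rw [ht, hx]

theorem IsDiagonalSymmetric.exists_mul_eq (hsymm : IsDiagonalSymmetric S)
    (hS : ∀ x y : S, ∃ s, x * y * s = x) (a b : S) : ∃ x, a * x = b := by
  have hrange : Set.range (a * ·) = Set.univ := by
    refine hsymm.eq_univ_of_mul_mem_iff ⟨a * a, a, rfl⟩ fun x y => ⟨?_, ?_⟩
    · rintro ⟨s, hs : a * s = x * y⟩
      obtain ⟨t, ht⟩ := hS x y
      exact ⟨s * t, by simp only [← mul_assoc, hs, ht]⟩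
    · rintro ⟨s, rfl⟩
      exact ⟨s * y, (mul_assoc a s y).symm⟩
  exact Set.range_eq_univ.mp hrange b

theorem completely_simple_DSC_group_general (hsimple : IsSimpleSemigroup S)
    (hprimitive : ∃ e : S, IsPrimitiveIdempotent e) (hsymm : IsDiagonalSymmetric S) :
    IsGroupSG S := by
  obtain ⟨e, he⟩ := hprimitive
  have : Nonempty S := ⟨e⟩
  refine isGroupSG_of_exists_mul_eq
    (hsymm.exists_mul_eq (hsimple.exists_mul_mul_eq_left he)) fun a b => ?_
  obtain ⟨x, hx⟩ := hsymm.op.exists_mul_eq (hsimple.op.exists_mul_mul_eq_left he.op) (op a) (op b)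
  exact ⟨x.unop, congrArg unop hx⟩

end Semigroup

/-- a completely simple (simple with a primitive idempotent)
DSC semigroup is a group. -/
theorem completely_simple_DSC_group {S : Type*} [Semigroup S]
    (hsimple : ∀ I : Set S, I.Nonempty →
      (∀ x ∈ I, ∀ s : S, s * x ∈ I ∧ x * s ∈ I) → I = Set.univ)
    (hprimitive : ∃ e : S, e * e = e ∧
      ∀ f : S, f * f = f → e * f = f → f * e = f → f = e)
    (h : IsDSC S) : IsGroupSG S :=
  completely_simple_DSC_group_general hsimple hprimitive h.isDiagonalSymmetric
end

section
/- Let S be a periodic semigroup. Then S is DSC if and only if S is a group (i.e., S has an identity element and every element of S has a two-sided inverse). -/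
/-- Positive powers in a semigroup: `spow s n = s ^ (n + 1)`. -/
def spow {S : Type*} [Mul S] (s : S) : ℕ → S
  | 0 => s
  | n + 1 => spow s n * s

/-!
In a DSC semigroup the relation `a = b ∨ a ∈ S z S` is symmetric for every `z`, which makes the
semigroup simple. If every element has a power in a subgroup, simplicity improves to `b ∈ b a S`:
iterating `b = p * b * (a * q)` puts a power of `a * q` lying in a subgroup to the right of `b`, and
that power can be cancelled there. So, for `e` idempotent, whether `e * (b * x) = b * x` depends
only on `b`, and the relation `e * b = b → e * a = a` is a diagonal subsemigroup; since it relates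
`e` to everything, its symmetry makes `e` a left identity, and dually a right identity. Conversely,
submonoids of `G × G` are closed under inversion when `G` is a torsion group, and the Mal'cev term
`x * y⁻¹ * z` then gives symmetry and transitivity.
-/

open MulOpposite

section Powers

variable {S : Type*} [Semigroup S]

theorem spow_mul_spow (s : S) (m n : ℕ) : spow s m * spow s n = spow s (m + n + 1) := by
  induction n with
  | zero => rfl
  | succ n ih => exact (mul_assoc _ _ _).symm.trans (congrArg (· * s) ih)

theorem spow_succ' (s : S) (n : ℕ) : spow s (n + 1) = s * spow s n := by
  rw [← Nat.zero_add n, ← spow_mul_spow, Nat.zero_add]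
  rfl

theorem spow_op (s : S) (n : ℕ) : spow (op s) n = op (spow s n) := by
  induction n with
  | zero => rfl
  | succ n ih => rw [spow_succ', ih, ← op_mul, spow]

theorem dvd_spow_of_dvd {a s : S} (h : a ∣ s) : ∀ n : ℕ, a ∣ spow s n
  | 0 => h
  | n + 1 => dvd_mul_of_dvd_left (dvd_spow_of_dvd h n) s

theorem spow_mul_mul_spow_eq {p z s : S} (h : p * z * s = z) (n : ℕ) :
    spow p n * z * spow s n = z := by
  induction n with
  | zero => exact h
  | succ n ih =>
    calc spow p (n + 1) * z * spow s (n + 1)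
        = spow p n * (p * z * s) * spow s n := by rw [spow_succ' s]; simp only [spow, mul_assoc]
      _ = z := by rw [h, ih]

theorem exists_isIdempotentElem_spow {s : S} {m n : ℕ} (hmn : m ≠ n)
    (h : spow s m = spow s n) : ∃ k, IsIdempotentElem (spow s k) := by
  wlog hlt : m < n generalizing m n
  · exact this hmn.symm h.symm (hmn.symm.lt_of_le (not_lt.mp hlt))
  obtain ⟨d, rfl⟩ := Nat.exists_eq_add_of_lt hlt
  have periodic : Function.Periodic (fun i => spow s (m + i)) (d + 1) := by
    intro i
    induction i with
    | zero => simpa only [zero_add, add_zero, add_assoc] using h.symm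
    | succ i ih =>
      rw [Nat.add_right_comm]
      exact congrArg (· * s) ih
  -- In ordinary notation `s ^ ((m + 1) * (d + 1))`: the exponent is a multiple of the period.
  refine ⟨m + (m + 1) * d, ?_⟩
  calc spow s (m + (m + 1) * d) * spow s (m + (m + 1) * d)
      = spow s (m + ((m + 1) * d + (m + 1) * (d + 1))) := by rw [spow_mul_spow]; congr 1; ring
    _ = spow s (m + (m + 1) * d) := periodic.nat_mul (m + 1) ((m + 1) * d)

theorem spow_eq_pow {M : Type*} [Monoid M] (x : M) (n : ℕ) : spow x n = x ^ (n + 1) := by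
  induction n with
  | zero => exact (pow_one x).symm
  | succ n ih => rw [spow, ih, ← pow_succ]

end Powers

/-- An element of a semigroup is group-bound if one of its positive powers lies in a subgroup. This
is encoded as that power `x` being completely regular: `x = x * t * x` for some `t` commuting with
`x`. Semigroups all of whose elements are group-bound are known as epigroups. -/
def IsGroupBound {S : Type*} [Mul S] (s : S) : Prop :=
  ∃ (n : ℕ) (t : S), spow s n * t * spow s n = spow s n ∧ Commute (spow s n) t

namespace IsGroupBound

variable {S : Type*} [Semigroup S] {s : S}

theorem of_spow_eq_spow {m n : ℕ} (hmn : m ≠ n) (h : spow s m = spow s n) : IsGroupBound s := by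
  obtain ⟨k, hk⟩ := exists_isIdempotentElem_spow hmn h
  exact ⟨k, spow s k, by rw [hk.eq, hk.eq], Commute.refl _⟩

protected theorem op (hs : IsGroupBound s) : IsGroupBound (op s) := by
  obtain ⟨n, t, hreg, hcomm⟩ := hs
  refine ⟨n, op t, ?_, ?_⟩
  · rw [spow_op, ← op_mul, ← op_mul, ← mul_assoc, hreg]
  · rw [spow_op]
    exact hcomm.op

theorem exists_isIdempotentElem (hs : IsGroupBound s) : ∃ e : S, IsIdempotentElem e := by
  obtain ⟨n, t, hreg, -⟩ := hs
  exact ⟨spow s n * t, by rw [IsIdempotentElem, ← mul_assoc, hreg]⟩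

theorem mul_dvd_of_mul_mul_eq (hs : IsGroupBound s) {a p z : S} (h : p * z * s = z)
    (ha : a ∣ s) : z * a ∣ z := by
  obtain ⟨n, t, hreg, hcomm⟩ := hs
  have hz : spow p n * z * spow s n = z := spow_mul_mul_spow_eq h n
  have hz_mul : z * (spow s n * t) = z :=
    calc z * (spow s n * t)
        = spow p n * z * spow s n * (t * spow s n) := by rw [hz, hcomm.eq]
      _ = spow p n * z * (spow s n * t * spow s n) := by simp only [mul_assoc]
      _ = z := by rw [hreg, hz]
  calc z * a ∣ z * spow s n := mul_dvd_mul_left z (dvd_spow_of_dvd ha n)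
    _ ∣ z := ⟨t, by rw [mul_assoc, hz_mul]⟩

end IsGroupBound

namespace IsDSC

section Mul

variable {S : Type*} [Mul S]

theorem symm (hS : IsDSC S) {r : S → S → Prop} (hrefl : ∀ a, r a a)
    (hmul : ∀ a b c d, r a b → r c d → r (a * c) (b * d)) {a b : S} (hab : r a b) : r b a :=
  (hS {p | r p.1 p.2} hrefl fun p q => hmul p.1 p.2 q.1 q.2).1 a b hab

protected theorem op (hS : IsDSC S) : IsDSC Sᵐᵒᵖ := by
  intro ρ hdiag hmul
  obtain ⟨hsymm, htrans⟩ := hS {p | (op p.1, op p.2) ∈ ρ} (fun a => hdiag (op a))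
    fun p q hp hq => hmul _ _ hq hp
  exact ⟨fun a b => hsymm a.unop b.unop, fun a b c => htrans a.unop b.unop c.unop⟩

end Mul

variable {S : Type*} [Semigroup S]

theorem exists_mul_mul_eq (hS : IsDSC S) (a b : S) : ∃ x y, x * a * y = b := by
  let r (c d : S) : Prop := c = d ∨ ∃ x y, x * a * y = c
  have hmul : ∀ c d c' d', r c d → r c' d' → r (c * c') (d * d') := by
    rintro c d c' d' (rfl | ⟨x, y, rfl⟩) h
    · obtain rfl | ⟨x, y, rfl⟩ := h
      · exact Or.inl rfl
      · exact Or.inr ⟨c * x, y, by simp only [mul_assoc]⟩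
    · exact Or.inr ⟨x, y * c', by simp only [mul_assoc]⟩
  have hab : r (a * a * a) b := Or.inr ⟨a, a, rfl⟩
  obtain h | h := hS.symm (fun _ => Or.inl rfl) hmul hab
  · exact ⟨a, a, h.symm⟩
  · exact h

theorem mul_dvd_self (hS : IsDSC S) (hbound : ∀ s : S, IsGroupBound s) (a b : S) :
    b * a ∣ b := by
  obtain ⟨p, q, h⟩ := hS.exists_mul_mul_eq (b * a) b
  have h' : p * b * (a * q) = b := by rw [← mul_assoc, mul_assoc p, h]
  exact (hbound (a * q)).mul_dvd_of_mul_mul_eq h' (dvd_mul_right a q)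

theorem mul_eq_right_of_isIdempotentElem (hS : IsDSC S) (hbound : ∀ s : S, IsGroupBound s) {e : S}
    (he : IsIdempotentElem e) (b : S) : e * b = b := by
  have left_of_mul : ∀ a x : S, e * (a * x) = a * x → e * a = a := by
    intro a x h
    obtain ⟨w, hw⟩ := hS.mul_dvd_self hbound x a
    rw [hw, ← mul_assoc, h]
  let r (c d : S) : Prop := e * d = d → e * c = c
  have hmul : ∀ c d c' d', r c d → r c' d' → r (c * c') (d * d') := by
    intro c d c' d' hcd _ h
    rw [← mul_assoc, hcd (left_of_mul d d' h)]
  have heb : r e b := fun _ => he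
  exact hS.symm (fun _ => id) hmul heb he

theorem isGroupSG [Nonempty S] (hS : IsDSC S) (hbound : ∀ s : S, IsGroupBound s) :
    IsGroupSG S := by
  obtain ⟨e, he⟩ := (hbound (Classical.arbitrary S)).exists_isIdempotentElem
  have one_mul : ∀ s, e * s = s := hS.mul_eq_right_of_isIdempotentElem hbound he
  have mul_one : ∀ s, s * e = s := fun s => op_injective <|
    hS.op.mul_eq_right_of_isIdempotentElem (fun s => (hbound s.unop).op) (congrArg op he) (op s)
  have exists_mul_eq : ∀ s, ∃ t, s * t = e := by
    intro s
    obtain ⟨t, ht⟩ := hS.mul_dvd_self hbound s e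
    exact ⟨t, by rw [ht, one_mul]⟩
  refine ⟨e, fun s => ⟨one_mul s, mul_one s⟩, fun s => ?_⟩
  obtain ⟨t, hst⟩ := exists_mul_eq s
  obtain ⟨u, htu⟩ := exists_mul_eq t
  have hsu : s = u := by rw [← mul_one s, ← htu, ← mul_assoc, hst, one_mul]
  exact ⟨t, hst, hsu ▸ htu⟩

end IsDSC

/-- The Mathlib `Group` structure, with the given multiplication, on a semigroup that is a group. -/
noncomputable abbrev IsGroupSG.toGroup {S : Type*} [Semigroup S] (hS : IsGroupSG S) : Group S :=
  letI : One S := ⟨hS.choose⟩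
  letI : Inv S := ⟨fun s => (hS.choose_spec.2 s).choose⟩
  Group.ofLeftAxioms mul_assoc (fun s => (hS.choose_spec.1 s).1)
    fun s => (hS.choose_spec.2 s).choose_spec.2

theorem isOfFinOrder_of_spow_eq_spow {M : Type*} [LeftCancelMonoid M] {x : M} {m n : ℕ}
    (hmn : m ≠ n) (h : spow x m = spow x n) : IsOfFinOrder x := by
  rw [spow_eq_pow, spow_eq_pow] at h
  by_contra hx
  exact hmn (Nat.succ_injective (injective_pow_iff_not_isOfFinOrder.mpr hx h))

theorem isDSC_of_forall_isOfFinOrder {G : Type*} [Group G] (hG : ∀ x : G, IsOfFinOrder x) :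
    IsDSC G := by
  intro ρ hdiag hmul
  let R : Submonoid (G × G) := { carrier := ρ, one_mem' := hdiag 1, mul_mem' := hmul _ _ }
  have R_inv_mem : ∀ p ∈ R, p⁻¹ ∈ R := fun p hp =>
    Submonoid.powers_le.mpr hp <|
      ((hG p.1).prod_mk (hG p.2)).mem_powers_iff_mem_zpowers.mpr
        (inv_mem (Subgroup.mem_zpowers p))
  constructor
  · intro x y hxy
    have h : (y, y) * (x, y)⁻¹ * (x, x) = (y, x) := by simp
    exact h ▸ R.mul_mem (R.mul_mem (hdiag y) (R_inv_mem _ hxy)) (hdiag x)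
  · intro x y z hxy hyz
    have h : (x, y) * (y, y)⁻¹ * (y, z) = (x, z) := by simp
    exact h ▸ R.mul_mem (R.mul_mem hxy (R_inv_mem _ (hdiag y))) hyz

/-- a periodic semigroup (for each `s` there are distinct
positive integers `m ≠ n` with `s ^ m = s ^ n`) is DSC iff it is a group. -/
theorem periodic_DSC_iff_group {S : Type*} [Semigroup S] [Nonempty S]
    (hper : ∀ s : S, ∃ m n : ℕ, m ≠ n ∧ spow s m = spow s n) :
    IsDSC S ↔ IsGroupSG S := by
  constructor
  · intro hS
    refine hS.isGroupSG fun s => ?_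
    obtain ⟨m, n, hmn, h⟩ := hper s
    exact IsGroupBound.of_spow_eq_spow hmn h
  · intro hS
    let : Group S := hS.toGroup
    refine isDSC_of_forall_isOfFinOrder fun x => ?_
    obtain ⟨m, n, hmn, h⟩ := hper x
    exact isOfFinOrder_of_spow_eq_spow hmn h
end

section
/- Let S be an inverse semigroup. If S is DSC, then S is a group; that is, S has an identity element and every element of S has a two-sided inverse with respect to that identity. -/
/-!
Idempotents of an inverse semigroup commute, and therefore the natural partial order (`x ≤ y` when
`x = e * y` for some idempotent `e`) is compatible with multiplication. It is thus a diagonal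
subsemigroup, and the DSC property makes it symmetric. For an idempotent `e` we have `e * x ≤ x`,
hence `x ≤ e * x`, which forces `e * x = x`: every idempotent is a left identity. Commuting left
identities coincide, so there is only one idempotent, and it is `s * t = t * s` whenever `t` is an
inverse of `s`.
-/

section Definitions

variable {S : Type*} [Mul S]

/-- `t` is an inverse of `s` in the sense of semigroup theory; no identity element is involved. -/
def IsSemigroupInverse (s t : S) : Prop :=
  s * t * s = s ∧ t * s * t = t

variable (S) in
/-- Inverse semigroups, as a predicate on the multiplication: inverses are not chosen as data. -/
def IsInverseSemigroup : Prop :=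
  ∀ s : S, ∃! t : S, IsSemigroupInverse s t

/-- The natural partial order `x ≤ y` of an inverse semigroup, with the idempotent acting on the
left. -/
def NaturalLE (x y : S) : Prop :=
  ∃ e : S, IsIdempotentElem e ∧ x = e * y

end Definitions

theorem IsDSC.symm_of_refl_of_mul {S : Type*} [Mul S] (h : IsDSC S) {r : S → S → Prop}
    (hrefl : ∀ x, r x x) (hmul : ∀ {x y x' y'}, r x y → r x' y' → r (x * x') (y * y'))
    {x y : S} (hxy : r x y) : r y x :=
  (h {p | r p.1 p.2} hrefl fun _ _ hp hq ↦ hmul hp hq).1 x y hxy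

section Semigroup

variable {S : Type*} [Semigroup S] {e f s t x y x' y' : S}

theorem isIdempotentElem_mul_of_mul_mul_eq_left (h : s * t * s = s) :
    IsIdempotentElem (s * t) := by
  rw [IsIdempotentElem, ← mul_assoc, h]

theorem isIdempotentElem_mul_of_mul_mul_eq_right (h : s * t * s = s) :
    IsIdempotentElem (t * s) := by
  rw [IsIdempotentElem, mul_assoc, ← mul_assoc s, h]

theorem isIdempotentElem_mul_mul_of_mul_mul_eq (h : x * (s * t) * x = x) :
    IsIdempotentElem (t * x * s) :=
  calc t * x * s * (t * x * s) = t * (x * (s * t) * x) * s := by simp only [mul_assoc]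
    _ = t * x * s := by rw [h]

theorem isGroupSG_of_unique_isIdempotentElem [Nonempty S] (hreg : ∀ s : S, ∃ t, s * t * s = s)
    (huniq : ∀ e f : S, IsIdempotentElem e → IsIdempotentElem f → e = f) : IsGroupSG S := by
  obtain ⟨a⟩ := ‹Nonempty S›
  obtain ⟨b, hab⟩ := hreg a
  have exists_inverse (s : S) : ∃ t, s * t * s = s ∧ s * t = a * b ∧ t * s = a * b := by
    obtain ⟨t, hst⟩ := hreg s
    have he := isIdempotentElem_mul_of_mul_mul_eq_left hab
    exact ⟨t, hst, huniq _ _ (isIdempotentElem_mul_of_mul_mul_eq_left hst) he,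
      huniq _ _ (isIdempotentElem_mul_of_mul_mul_eq_right hst) he⟩
  refine ⟨a * b, fun s ↦ ?_, fun s ↦ ?_⟩
  · obtain ⟨t, hst, hleft, hright⟩ := exists_inverse s
    exact ⟨by rw [← hleft, hst], by rw [← hright, ← mul_assoc, hst]⟩
  · obtain ⟨t, -, hleft, hright⟩ := exists_inverse s
    exact ⟨t, hleft, hright⟩

namespace IsSemigroupInverse

theorem symm (h : IsSemigroupInverse s t) : IsSemigroupInverse t s :=
  ⟨h.2, h.1⟩

theorem self_of_isIdempotentElem (he : IsIdempotentElem e) : IsSemigroupInverse e e := by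
  simp only [IsSemigroupInverse, he.eq, and_self]

theorem mul_mul_of_isIdempotentElem (he : IsIdempotentElem e) (hf : IsIdempotentElem f)
    (h : IsSemigroupInverse (e * f) x) : IsSemigroupInverse (e * f) (f * x * e) := by
  constructor
  · calc e * f * (f * x * e) * (e * f) = e * (f * f) * x * (e * e) * f := by
          simp only [mul_assoc]
      _ = e * f * x * (e * f) := by rw [he.eq, hf.eq]; simp only [mul_assoc]
      _ = e * f := h.1
  · calc f * x * e * (e * f) * (f * x * e) = f * x * (e * e) * (f * f) * x * e := by
          simp only [mul_assoc]
      _ = f * (x * (e * f) * x) * e := by rw [he.eq, hf.eq]; simp only [mul_assoc]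
      _ = f * x * e := by rw [h.2]

theorem of_isIdempotentElem_mul (he : IsIdempotentElem e)
    (hf : IsIdempotentElem f) (hef : IsIdempotentElem (e * f)) (hfe : IsIdempotentElem (f * e)) :
    IsSemigroupInverse (e * f) (f * e) := by
  have key {e f : S} (he : IsIdempotentElem e) (hf : IsIdempotentElem f)
      (hef : IsIdempotentElem (e * f)) : e * f * (f * e) * (e * f) = e * f :=
    calc e * f * (f * e) * (e * f) = e * (f * f) * (e * e) * f := by simp only [mul_assoc]
      _ = e * f * (e * f) := by rw [he.eq, hf.eq]; simp only [mul_assoc]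
      _ = e * f := hef
  exact ⟨key he hf hef, key hf he hfe⟩

end IsSemigroupInverse

namespace IsInverseSemigroup

theorem isIdempotentElem_mul (hS : IsInverseSemigroup S) (he : IsIdempotentElem e)
    (hf : IsIdempotentElem f) : IsIdempotentElem (e * f) := by
  obtain ⟨x, hx, hx_unique⟩ := hS (e * f)
  have x_idem : IsIdempotentElem x := by
    rw [← hx_unique _ (hx.mul_mul_of_isIdempotentElem he hf)]
    exact isIdempotentElem_mul_mul_of_mul_mul_eq hx.2
  rwa [(hS x).unique hx.symm (.self_of_isIdempotentElem x_idem)]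

theorem commute_of_isIdempotentElem (hS : IsInverseSemigroup S) (he : IsIdempotentElem e)
    (hf : IsIdempotentElem f) : Commute e f := by
  have hef := hS.isIdempotentElem_mul he hf
  exact (hS (e * f)).unique (.self_of_isIdempotentElem hef)
    (.of_isIdempotentElem_mul he hf hef (hS.isIdempotentElem_mul hf he))

end IsInverseSemigroup

theorem exists_isIdempotentElem_mul_eq_mul (hf : IsIdempotentElem f) (hst : s * t * s = s)
    (hcomm : Commute f (t * s)) : ∃ g, IsIdempotentElem g ∧ s * f = g * s := by
  have hsf : s * f * t * s = s * f :=
    calc s * f * t * s = s * (f * (t * s)) := by simp only [mul_assoc]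
      _ = s * t * s * f := by rw [hcomm.eq]; simp only [mul_assoc]
      _ = s * f := by rw [hst]
  refine ⟨s * f * t, ?_, hsf.symm⟩
  calc s * f * t * (s * f * t) = s * f * t * s * f * t := by simp only [mul_assoc]
    _ = s * (f * f) * t := by rw [hsf]; simp only [mul_assoc]
    _ = s * f * t := by rw [hf.eq]

namespace NaturalLE

theorem refl_of_mul_mul_eq (h : s * t * s = s) : NaturalLE s s :=
  ⟨s * t, isIdempotentElem_mul_of_mul_mul_eq_left h, h.symm⟩

theorem mul (hS : IsInverseSemigroup S) (h : NaturalLE x y) (h' : NaturalLE x' y') :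
    NaturalLE (x * x') (y * y') := by
  obtain ⟨e, he, rfl⟩ := h
  obtain ⟨f, hf, rfl⟩ := h'
  obtain ⟨t, ht, -⟩ := hS y
  obtain ⟨g, hg, hyf⟩ := exists_isIdempotentElem_mul_eq_mul hf ht.1
    (hS.commute_of_isIdempotentElem hf (isIdempotentElem_mul_of_mul_mul_eq_right ht.1))
  refine ⟨e * g, hS.isIdempotentElem_mul he hg, ?_⟩
  calc e * y * (f * y') = e * (y * f) * y' := by simp only [mul_assoc]
    _ = e * g * (y * y') := by rw [hyf]; simp only [mul_assoc]

theorem mul_eq_right (hcomm : ∀ g : S, IsIdempotentElem g → Commute e g)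
    (he : IsIdempotentElem e) (h : NaturalLE x (e * y)) : e * x = x := by
  obtain ⟨g, hg, rfl⟩ := h
  calc e * (g * (e * y)) = e * g * e * y := by simp only [mul_assoc]
    _ = g * (e * e) * y := by rw [(hcomm g hg).eq]; simp only [mul_assoc]
    _ = g * (e * y) := by rw [he.eq, mul_assoc]

end NaturalLE

theorem eq_of_isIdempotentElem_of_naturalLE_symm
    (hcomm : ∀ e f : S, IsIdempotentElem e → IsIdempotentElem f → Commute e f)
    (hsymm : ∀ {x y : S}, NaturalLE x y → NaturalLE y x)
    (he : IsIdempotentElem e) (hf : IsIdempotentElem f) : e = f := by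
  have mul_eq_right {e : S} (he : IsIdempotentElem e) (x : S) : e * x = x :=
    (hsymm ⟨e, he, rfl⟩ : NaturalLE x (e * x)).mul_eq_right (hcomm e · he) he
  calc e = f * e := (mul_eq_right hf e).symm
    _ = e * f := hcomm f e hf he
    _ = f := mul_eq_right he f

end Semigroup

/-- an inverse semigroup (each element has a unique semigroup
inverse) which is DSC is a group. -/
theorem inverse_DSC_group {S : Type*} [Semigroup S] [Nonempty S]
    (hinv : ∀ s : S, ∃! t : S, s * t * s = s ∧ t * s * t = t)
    (h : IsDSC S) : IsGroupSG S := by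
  have hS : IsInverseSemigroup S := hinv
  have hreg (s : S) : ∃ t, s * t * s = s := (hS s).exists.imp fun _ ht ↦ ht.1
  have naturalLE_symm {x y : S} : NaturalLE x y → NaturalLE y x :=
    h.symm_of_refl_of_mul (fun s ↦ (hreg s).elim fun _ ↦ .refl_of_mul_mul_eq) (.mul hS)
  refine isGroupSG_of_unique_isIdempotentElem hreg fun e f ↦ ?_
  exact eq_of_isIdempotentElem_of_naturalLE_symm
    (fun _ _ ↦ hS.commute_of_isIdempotentElem) naturalLE_symm
end

section
/- Let S be an inverse semigroup. Then every diagonal inverse subsemigroup of S × S is a congruence on S if and only if S is a group (i.e., S has an identity element and every element of S has a two-sided inverse). -/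
section Semigroup

variable {S : Type*} [Semigroup S]

theorem IsGroupSG.subsingleton_idempotents (hS : IsGroupSG S) :
    {e : S | IsIdempotentElem e}.Subsingleton := by
  obtain ⟨u, hu, hinv⟩ := hS
  have eq_unit : ∀ e : S, IsIdempotentElem e → e = u := by
    intro e he
    obtain ⟨t, het, -⟩ := hinv e
    calc e = e * (e * t) := by rw [het, (hu e).2]
      _ = u := by rw [he.mul_self_mul, het]
  intro e he f hf
  rw [eq_unit e he, eq_unit f hf]

theorem isGroupSG_of_subsingleton_idempotents [Nonempty S]
    (hreg : ∀ s : S, ∃ t, s * t * s = s)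
    (hidem : {e : S | IsIdempotentElem e}.Subsingleton) : IsGroupSG S := by
  choose t ht using hreg
  have right_idem (s : S) : IsIdempotentElem (s * t s) := by
    rw [IsIdempotentElem, ← mul_assoc, ht]
  have left_idem (s : S) : IsIdempotentElem (t s * s) := by
    rw [IsIdempotentElem, mul_assoc, ← mul_assoc s, ht]
  obtain ⟨a⟩ := ‹Nonempty S›
  refine ⟨a * t a, fun s => ⟨?_, ?_⟩, fun s => ⟨t s, ?_, ?_⟩⟩
  · rw [hidem (right_idem a) (right_idem s), ht]
  · rw [hidem (right_idem a) (left_idem s), ← mul_assoc, ht]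
  · exact hidem (right_idem s) (right_idem a)
  · exact hidem (left_idem s) (right_idem a)

end Semigroup

/-- A semigroup in which every element `s` has a unique inverse `s⁻¹`, in the sense that
`s * s⁻¹ * s = s` and `s⁻¹ * s * s⁻¹ = s⁻¹`. -/
class InverseSemigroup (S : Type*) extends Semigroup S, Inv S where
  mul_inv_mul_self (s : S) : s * s⁻¹ * s = s
  inv_mul_mul_inv (s : S) : s⁻¹ * s * s⁻¹ = s⁻¹
  eq_inv_of_mul_mul_eq {s t : S} : s * t * s = s → t * s * t = t → t = s⁻¹

namespace InverseSemigroup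

variable {S : Type*} [InverseSemigroup S] {e f : S}

instance : InvolutiveInv S where
  inv_inv s := (eq_inv_of_mul_mul_eq (inv_mul_mul_inv s) (mul_inv_mul_self s)).symm

theorem isIdempotentElem_mul_inv_self (s : S) : IsIdempotentElem (s * s⁻¹) := by
  rw [IsIdempotentElem, ← mul_assoc, mul_inv_mul_self]

theorem isIdempotentElem_inv_mul_self (s : S) : IsIdempotentElem (s⁻¹ * s) := by
  rw [IsIdempotentElem, ← mul_assoc, inv_mul_mul_inv]

theorem inv_eq_self_of_isIdempotentElem (he : IsIdempotentElem e) : e⁻¹ = e :=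
  (eq_inv_of_mul_mul_eq (by rw [he.eq, he.eq]) (by rw [he.eq, he.eq])).symm

theorem inv_mul_eq_of_isIdempotentElem (he : IsIdempotentElem e)
    (hf : IsIdempotentElem f) : (e * f)⁻¹ = f * (e * f)⁻¹ * e := by
  symm
  apply eq_inv_of_mul_mul_eq
  · calc e * f * (f * (e * f)⁻¹ * e) * (e * f)
        = e * (f * f) * (e * f)⁻¹ * ((e * e) * f) := by simp only [mul_assoc]
      _ = e * f := by rw [he.eq, hf.eq, mul_inv_mul_self]
  · calc f * (e * f)⁻¹ * e * (e * f) * (f * (e * f)⁻¹ * e)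
        = f * ((e * f)⁻¹ * ((e * e) * (f * f)) * (e * f)⁻¹) * e := by simp only [mul_assoc]
      _ = f * (e * f)⁻¹ * e := by rw [he.eq, hf.eq, inv_mul_mul_inv]

theorem isIdempotentElem_mul (he : IsIdempotentElem e) (hf : IsIdempotentElem f) :
    IsIdempotentElem (e * f) := by
  have hinv := inv_mul_eq_of_isIdempotentElem he hf
  have inv_idem : IsIdempotentElem (e * f)⁻¹ :=
    calc (e * f)⁻¹ * (e * f)⁻¹
        = f * (e * f)⁻¹ * e * (f * (e * f)⁻¹ * e) := by rw [← hinv]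
      _ = f * ((e * f)⁻¹ * (e * f) * (e * f)⁻¹) * e := by simp only [mul_assoc]
      _ = (e * f)⁻¹ := by rw [inv_mul_mul_inv, ← hinv]
  rwa [← inv_inv (e * f), inv_eq_self_of_isIdempotentElem inv_idem]

theorem commute_of_isIdempotentElem (he : IsIdempotentElem e) (hf : IsIdempotentElem f) :
    Commute e f := by
  -- `f * e` is an inverse of the idempotent `e * f`, which is its own inverse.
  have mul_mul_eq {a b : S} (ha : IsIdempotentElem a) (hb : IsIdempotentElem b) :
      a * b * (b * a) * (a * b) = a * b :=
    calc a * b * (b * a) * (a * b) = a * (b * b) * ((a * a) * b) := by simp only [mul_assoc]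
      _ = a * b := by rw [ha.eq, hb.eq, (isIdempotentElem_mul ha hb).eq]
  calc e * f = (e * f)⁻¹ := (inv_eq_self_of_isIdempotentElem (isIdempotentElem_mul he hf)).symm
    _ = f * e := (eq_inv_of_mul_mul_eq (mul_mul_eq he hf) (mul_mul_eq hf he)).symm

protected theorem mul_inv_rev (x y : S) : (x * y)⁻¹ = y⁻¹ * x⁻¹ := by
  have hcomm : Commute (x⁻¹ * x) (y * y⁻¹) :=
    commute_of_isIdempotentElem (isIdempotentElem_inv_mul_self x) (isIdempotentElem_mul_inv_self y)
  symm
  apply eq_inv_of_mul_mul_eq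
  · calc x * y * (y⁻¹ * x⁻¹) * (x * y) = x * ((y * y⁻¹) * (x⁻¹ * x)) * y := by
          simp only [mul_assoc]
      _ = (x * x⁻¹ * x) * (y * y⁻¹ * y) := by rw [← hcomm.eq]; simp only [mul_assoc]
      _ = x * y := by rw [mul_inv_mul_self, mul_inv_mul_self]
  · calc y⁻¹ * x⁻¹ * (x * y) * (y⁻¹ * x⁻¹) = y⁻¹ * ((x⁻¹ * x) * (y * y⁻¹)) * x⁻¹ := by
          simp only [mul_assoc]
      _ = (y⁻¹ * y * y⁻¹) * (x⁻¹ * x * x⁻¹) := by rw [hcomm.eq]; simp only [mul_assoc]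
      _ = y⁻¹ * x⁻¹ := by rw [inv_mul_mul_inv, inv_mul_mul_inv]

theorem conj_mul_self_of_isIdempotentElem (he : IsIdempotentElem e) (s : S) :
    s * e * s⁻¹ * s = s * e :=
  calc s * e * s⁻¹ * s = s * (e * (s⁻¹ * s)) := by simp only [mul_assoc]
    _ = s * s⁻¹ * s * e := by
      rw [(commute_of_isIdempotentElem he (isIdempotentElem_inv_mul_self s)).eq]
      simp only [mul_assoc]
    _ = s * e := by rw [mul_inv_mul_self]

theorem isIdempotentElem_conj (he : IsIdempotentElem e) (s : S) :
    IsIdempotentElem (s * e * s⁻¹) :=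
  calc s * e * s⁻¹ * (s * e * s⁻¹) = (s * e * s⁻¹ * s) * e * s⁻¹ := by simp only [mul_assoc]
    _ = s * e * s⁻¹ := by rw [conj_mul_self_of_isIdempotentElem he, he.mul_mul_self]

theorem mul_inv_mul_eq_left_of_subsingleton_idempotents
    (hidem : {e : S | IsIdempotentElem e}.Subsingleton) (x y : S) : x * y⁻¹ * y = x := by
  rw [mul_assoc, hidem (isIdempotentElem_inv_mul_self y) (isIdempotentElem_inv_mul_self x),
    ← mul_assoc, mul_inv_mul_self]

theorem mul_inv_mul_eq_right_of_subsingleton_idempotents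
    (hidem : {e : S | IsIdempotentElem e}.Subsingleton) (x y : S) : x * x⁻¹ * y = y := by
  rw [hidem (isIdempotentElem_mul_inv_self x) (isIdempotentElem_mul_inv_self y),
    mul_inv_mul_self]

end InverseSemigroup

section Diagonal

open InverseSemigroup
open scoped SetRel

variable {S : Type*}

/-- A diagonal inverse subsemigroup of `S × S`, viewed as a relation on `S`: it contains the
diagonal and is closed under the componentwise product and inverse. -/
structure IsDiagonalInverseSubsemigroup [Mul S] [Inv S] (ρ : SetRel S S) : Prop where
  diag_mem (x : S) : x ~[ρ] x
  mul_mem {p q : S × S} : p ∈ ρ → q ∈ ρ → p * q ∈ ρ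
  inv_mem {p : S × S} : p ∈ ρ → p⁻¹ ∈ ρ

/-- The natural partial order of an inverse semigroup: `x` lies below `y` if `x = e * y` for some
idempotent `e`. -/
def naturalOrder (S : Type*) [Mul S] : SetRel S S :=
  {(x, y) | ∃ e, IsIdempotentElem e ∧ x = e * y}

variable [InverseSemigroup S]

theorem isDiagonalInverseSubsemigroup_naturalOrder :
    IsDiagonalInverseSubsemigroup (naturalOrder S) where
  diag_mem x := ⟨x * x⁻¹, isIdempotentElem_mul_inv_self x, (mul_inv_mul_self x).symm⟩
  mul_mem := by
    rintro ⟨_, y⟩ ⟨_, y'⟩ ⟨e, he, rfl⟩ ⟨f, hf, rfl⟩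
    refine ⟨e * (y * f * y⁻¹), isIdempotentElem_mul he (isIdempotentElem_conj hf y), ?_⟩
    calc e * y * (f * y') = e * (y * f) * y' := by simp only [mul_assoc]
      _ = e * (y * f * y⁻¹ * y) * y' := by rw [conj_mul_self_of_isIdempotentElem hf]
      _ = e * (y * f * y⁻¹) * (y * y') := by simp only [mul_assoc]
  inv_mem := by
    rintro ⟨_, y⟩ ⟨e, he, rfl⟩
    refine ⟨y⁻¹ * e * y⁻¹⁻¹, isIdempotentElem_conj he y⁻¹, ?_⟩
    calc (e * y)⁻¹ = y⁻¹ * e := by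
          rw [InverseSemigroup.mul_inv_rev, inv_eq_self_of_isIdempotentElem he]
      _ = y⁻¹ * e * y⁻¹⁻¹ * y⁻¹ := (conj_mul_self_of_isIdempotentElem he y⁻¹).symm

theorem subsingleton_idempotents_of_isSymm_naturalOrder (hsymm : (naturalOrder S).IsSymm) :
    {e : S | IsIdempotentElem e}.Subsingleton := by
  have mul_eq_left {e f : S} (he : IsIdempotentElem e) (hf : IsIdempotentElem f) :
      f * e = f := by
    obtain ⟨g, -, hg⟩ : f ~[naturalOrder S] (e * f) := SetRel.symm _ ⟨e, he, rfl⟩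
    have hg' : f = g * (f * e) := by rwa [← (commute_of_isIdempotentElem he hf).eq]
    calc f * e = g * (f * e) * e := by rw [← hg']
      _ = g * (f * e) := by rw [mul_assoc, he.mul_mul_self]
      _ = f := hg'.symm
  intro e he f hf
  calc e = e * f := (mul_eq_left hf he).symm
    _ = f * e := commute_of_isIdempotentElem he hf
    _ = f := mul_eq_left he hf

namespace IsDiagonalInverseSubsemigroup

variable {ρ : SetRel S S}

theorem isSymm (hρ : IsDiagonalInverseSubsemigroup ρ)
    (hidem : {e : S | IsIdempotentElem e}.Subsingleton) : ρ.IsSymm where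
  symm x y hxy := by
    have hprod : (y * x⁻¹ * x) ~[ρ] (y * y⁻¹ * x) :=
      hρ.mul_mem (hρ.mul_mem (hρ.diag_mem y) (hρ.inv_mem hxy)) (hρ.diag_mem x)
    rwa [mul_inv_mul_eq_left_of_subsingleton_idempotents hidem,
      mul_inv_mul_eq_right_of_subsingleton_idempotents hidem] at hprod

theorem isTrans (hρ : IsDiagonalInverseSubsemigroup ρ)
    (hidem : {e : S | IsIdempotentElem e}.Subsingleton) : ρ.IsTrans where
  trans x y z hxy hyz := by
    have hprod : (x * y⁻¹ * y) ~[ρ] (y * y⁻¹ * z) :=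
      hρ.mul_mem (hρ.mul_mem hxy (hρ.diag_mem y⁻¹)) hyz
    rwa [mul_inv_mul_eq_left_of_subsingleton_idempotents hidem,
      mul_inv_mul_eq_right_of_subsingleton_idempotents hidem] at hprod

end IsDiagonalInverseSubsemigroup

end Diagonal

/-- an inverse semigroup `S` (with inverse operation `inv`) has
the property that every diagonal *inverse* subsemigroup of `S × S` is a
congruence iff `S` is a group. -/
theorem inverse_diagonal_iff_group {S : Type*} [Semigroup S] [Nonempty S]
    (inv : S → S)
    (hinv : ∀ s : S, s * inv s * s = s ∧ inv s * s * inv s = inv s)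
    (huniq : ∀ s t : S, s * t * s = s → t * s * t = t → t = inv s) :
    (∀ ρ : Set (S × S),
      (∀ x : S, (x, x) ∈ ρ) →
      (∀ p q : S × S, p ∈ ρ → q ∈ ρ → p * q ∈ ρ) →
      (∀ p : S × S, p ∈ ρ → (inv p.1, inv p.2) ∈ ρ) →
      ((∀ x y : S, ((x, y) : S × S) ∈ ρ → ((y, x) : S × S) ∈ ρ) ∧
       (∀ x y z : S, ((x, y) : S × S) ∈ ρ → ((y, z) : S × S) ∈ ρ →
          ((x, z) : S × S) ∈ ρ)))
    ↔ IsGroupSG S := by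
  let _ : InverseSemigroup S :=
    { inv := inv
      mul_inv_mul_self := fun s => (hinv s).1
      inv_mul_mul_inv := fun s => (hinv s).2
      eq_inv_of_mul_mul_eq := huniq _ _ }
  constructor
  · intro hcong
    have hleq := isDiagonalInverseSubsemigroup_naturalOrder (S := S)
    have hsymm : (naturalOrder S).IsSymm :=
      ⟨(hcong _ hleq.diag_mem (fun _ _ => hleq.mul_mem) (fun _ => hleq.inv_mem)).1⟩
    exact isGroupSG_of_subsingleton_idempotents (fun s => ⟨inv s, (hinv s).1⟩)
      (subsingleton_idempotents_of_isSymm_naturalOrder hsymm)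
  · intro hgroup ρ hdiag hmul hinvmem
    have hρ : IsDiagonalInverseSubsemigroup ρ := ⟨hdiag, hmul _ _, hinvmem _⟩
    have hidem := hgroup.subsingleton_idempotents
    exact ⟨(hρ.isSymm hidem).symm, (hρ.isTrans hidem).trans⟩
end

section
/- Let S be a DSC semigroup and let σ be a congruence on S. Then the quotient semigroup S/σ is also DSC. -/
theorem IsDSC.of_surjective {M N : Type*} [Mul M] [Mul N] (hM : IsDSC M) (f : M →ₙ* N)
    (hf : Function.Surjective f) : IsDSC N := by
  intro ρ hrefl hmul
  rw [hf.forall₂, hf.forall₃]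
  refine hM (f.prodMap f ⁻¹' ρ) (fun x => hrefl (f x)) fun p q hp hq => ?_
  rw [Set.mem_preimage, map_mul]
  exact hmul _ _ hp hq

theorem quotient_DSC_general {M : Type*} [Mul M] (hM : IsDSC M) (σ : Con M) :
    IsDSC σ.Quotient :=
  hM.of_surjective σ.mkMulHom Quotient.mk''_surjective

/-- the quotient of a DSC semigroup by a congruence is DSC. -/
theorem quotient_DSC {S : Type*} [Semigroup S] (h : IsDSC S) (σ : Con S) :
    IsDSC σ.Quotient :=
  quotient_DSC_general h σ
end

section
/- Let S be a DSC semigroup, T a semigroup, and f : S → T a surjective semigroup homomorphism. Then T is DSC. -/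
section Preimage

variable {α β : Type*} {f : α → β} {R : SetRel β β}

theorem isSymm_preimage_iff (hf : f.Surjective) :
    SetRel.IsSymm (Prod.map f f ⁻¹' R) ↔ R.IsSymm where
  mp h := ⟨hf.forall₂.2 h.symm⟩
  mpr _ := SetRel.isSymm_preimage

theorem isTrans_preimage_iff (hf : f.Surjective) :
    SetRel.IsTrans (Prod.map f f ⁻¹' R) ↔ R.IsTrans where
  mp h := ⟨hf.forall₃.2 h.trans⟩
  mpr _ := SetRel.isTrans_preimage

end Preimage

theorem isDSC_iff_forall_subsemigroup {M : Type*} [Mul M] :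
    IsDSC M ↔ ∀ ρ : Subsemigroup (M × M), SetRel.IsRefl (ρ : Set (M × M)) →
      SetRel.IsSymm (ρ : Set (M × M)) ∧ SetRel.IsTrans (ρ : Set (M × M)) where
  mp h ρ hrefl :=
    have ⟨hsymm, htrans⟩ := h ρ hrefl.refl fun _ _ ↦ ρ.mul_mem
    ⟨⟨hsymm⟩, ⟨htrans⟩⟩
  mpr h ρ hdiag hmul :=
    have ⟨hsymm, htrans⟩ := h ⟨ρ, hmul _ _⟩ ⟨hdiag⟩
    ⟨hsymm.symm, htrans.trans⟩

theorem surjective_image_DSC_general {M N : Type*} [Mul M] [Mul N]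
    (f : M →ₙ* N) (hf : Function.Surjective f) (h : IsDSC M) : IsDSC N := by
  rw [isDSC_iff_forall_subsemigroup] at h ⊢
  intro ρ hrefl
  obtain ⟨hsymm, htrans⟩ := h (ρ.comap (f.prodMap f)) SetRel.isRefl_preimage
  exact ⟨(isSymm_preimage_iff hf).1 hsymm, (isTrans_preimage_iff hf).1 htrans⟩

/-- the image of a DSC semigroup under a surjective semigroup
homomorphism is DSC. -/
theorem surjective_image_DSC {S T : Type*} [Semigroup S] [Semigroup T]
    (f : S →ₙ* T) (hf : Function.Surjective f) (h : IsDSC S) : IsDSC T :=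
  surjective_image_DSC_general f hf h
end

section
/- The bicyclic monoid B is not DSC; that is, there exists a subsemigroup of B × B containing the diagonal which is not a congruence on B. -/
/-- Multiplication of the bicyclic monoid on `ℕ × ℕ`:
`(m, n)(p, q) = (m - n + k, q - p + k)` where `k = max n p`
(written so that all subtractions are non-negative). -/
def bicyclicMul (x y : ℕ × ℕ) : ℕ × ℕ :=
  (x.1 + (max x.2 y.1 - x.2), y.2 + (max x.2 y.1 - y.1))

/-!
The natural partial order of the bicyclic monoid, in which multiplying by the idempotent `(k, k)`
moves an element down, is compatible with multiplication, hence a diagonal subsemigroup. It is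
antisymmetric but not trivial, so it is not symmetric.
-/

theorem IsDSCOf.symm_of_compatible {S : Type*} {mul : S → S → S} (h : IsDSCOf mul)
    {r : S → S → Prop} [Std.Refl r]
    (hmul : ∀ ⦃a b c d : S⦄, r a b → r c d → r (mul a c) (mul b d)) {x y : S} (hxy : r x y) :
    r y x :=
  (h {p | r p.1 p.2} (refl_of r) fun _ _ hp hq => hmul hp hq).1 x y hxy

theorem IsDSCOf.eq_of_compatible {S : Type*} {mul : S → S → S} (h : IsDSCOf mul)
    {r : S → S → Prop} [Std.Refl r] [Std.Antisymm r]
    (hmul : ∀ ⦃a b c d : S⦄, r a b → r c d → r (mul a c) (mul b d)) {x y : S} (hxy : r x y) :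
    x = y :=
  antisymm_of r hxy (h.symm_of_compatible hmul hxy)

/-- The natural partial order of the bicyclic monoid: `x` lies below `y` if `x = e * y` for some
idempotent `e`. The idempotents are the pairs `(j, j)`, and the products `(j, j) * y` are the
diagonal translates `y + (k, k)`, which is the form used here. -/
def BicyclicLE (x y : ℕ × ℕ) : Prop :=
  ∃ k : ℕ, x = y + (k, k)

theorem bicyclicMul_add_diag (x y : ℕ × ℕ) (k l : ℕ) :
    bicyclicMul (x + (k, k)) (y + (l, l)) =
      bicyclicMul x y +
        (max (x.2 + k) (y.1 + l) - max x.2 y.1, max (x.2 + k) (y.1 + l) - max x.2 y.1) := by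
  ext <;> simp only [bicyclicMul, Prod.fst_add, Prod.snd_add] <;> omega

namespace BicyclicLE

instance : Std.Refl BicyclicLE :=
  ⟨fun _ => ⟨0, rfl⟩⟩

instance : Std.Antisymm BicyclicLE where
  antisymm := by
    rintro _ y ⟨k, rfl⟩ ⟨l, hl⟩
    have hk : k = 0 := by
      have hfst : y.1 = y.1 + k + l := congrArg Prod.fst hl
      omega
    subst hk
    rfl

theorem mul {x x' y y' : ℕ × ℕ} (h : BicyclicLE x y) (h' : BicyclicLE x' y') :
    BicyclicLE (bicyclicMul x x') (bicyclicMul y y') := by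
  obtain ⟨k, rfl⟩ := h
  obtain ⟨l, rfl⟩ := h'
  exact ⟨_, bicyclicMul_add_diag y y' k l⟩

end BicyclicLE

/-- the bicyclic monoid is not DSC: some subsemigroup of `B × B`
containing the diagonal is not a congruence. -/
theorem bicyclic_not_DSC : ¬ IsDSCOf bicyclicMul := by
  intro h
  have hle : BicyclicLE (1, 1) (0, 0) := ⟨1, rfl⟩
  have heq : ((1, 1) : ℕ × ℕ) = (0, 0) := h.eq_of_compatible (fun _ _ _ _ => BicyclicLE.mul) hle
  exact absurd heq (by decide)
end

section
/- Let p ≥ q be infinite cardinals, let X be a set of cardinality p, and let B(p,q) = { f : X → X : f is injective and the complement X \ f(X) of the image of f has cardinality q }. Then B(p,q) is a subsemigroup of the monoid of all self-maps of X under composition, and B(p,q) is not DSC: the relation ρ = { (f,g) ∈ B(p,q) × B(p,q) : (X \ f(X)) ∩ (X \ g(X)) ≠ ∅ } is a diagonal subsemigroup of B(p,q) × B(p,q) which is symmetric but not transitive. -/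
open Cardinal

universe u

/-- The generalized Baer--Levi semigroup `B(p, q)` as a set of self-maps of a
set `X` of cardinality `p`: injective maps whose image has complement of
cardinality `q`. -/
def baerLeviSet (X : Type u) (q : Cardinal.{u}) : Set (X → X) :=
  {f | Function.Injective f ∧ #(↥(Set.range f)ᶜ) = q}

/-- The relation `ρ = {(f, g) : (X \ f(X)) ∩ (X \ g(X)) ≠ ∅}`. -/
def baerLeviRho (X : Type u) : Set ((X → X) × (X → X)) :=
  {p | ((Set.range p.1)ᶜ ∩ (Set.range p.2)ᶜ).Nonempty}

/-!
If `g` is injective, then `X \ g(f(X))` is the disjoint union of `X \ g(X)` and `g(X \ f(X))`.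
Hence `B(p, q)` is closed under composition, because `q + q = q`.
To see that `ρ` is not transitive, take `f ∈ B(p, q)` and let `h` fix every point outside `f(X)`
and agree with `f` on `f(X)`. The complement of the image of `h` is `f(X \ f(X))`, which is
disjoint from `X \ f(X)`, whereas the complement of the image of `f ∘ f` is the union of these two
sets. So `f ∘ f` is `ρ`-related to both `f` and `h`, but `f` is not `ρ`-related to `h`.
-/

section CompositionRange

open Set Function

theorem compl_range_comp_of_injective {α β γ : Type*} {g : β → γ} (hg : Injective g) (f : α → β) :
    (range (g ∘ f))ᶜ = (range g)ᶜ ∪ g '' (range f)ᶜ := by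
  rw [range_comp, ← compl_compl (range f), image_compl_eq_range_sdiff_image hg, Set.compl_sdiff,
    compl_compl, union_comm]

theorem disjoint_compl_range_image {α β : Type*} (f : α → β) (s : Set α) :
    Disjoint (range f)ᶜ (f '' s) :=
  disjoint_compl_left.mono_right (image_subset_range f s)

theorem mk_compl_range_comp {α : Type*} {β γ : Type u} {g : β → γ} (hg : Injective g)
    (f : α → β) : #↥(range (g ∘ f))ᶜ = #↥(range g)ᶜ + #↥(range f)ᶜ := by
  rw [compl_range_comp_of_injective hg, mk_union_of_disjoint (disjoint_compl_range_image g _),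
    mk_image_eq hg]

theorem exists_injective_compl_range_eq_image {α : Type*} {f : α → α} (hf : Injective f) :
    ∃ h : α → α, Injective h ∧ (range h)ᶜ = f '' (range f)ᶜ := by
  classical
  refine ⟨(range f).piecewise f id, ?_, ?_⟩
  · refine (injective_piecewise_iff _).2 ⟨hf.injOn, injOn_id _, ?_⟩
    rintro x - y hy rfl
    exact hy (mem_range_self x)
  · rw [range_piecewise, image_id, compl_union, compl_compl, image_compl_eq_range_sdiff_image hf,
      sdiff_eq, inter_comm]

end CompositionRange

section BaerLevi

open Set

variable {X : Type u} {q : Cardinal.{u}} {f g : X → X}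

theorem comp_mem_baerLeviSet (hq : ℵ₀ ≤ q) (hg : g ∈ baerLeviSet X q) (hf : f ∈ baerLeviSet X q) :
    g ∘ f ∈ baerLeviSet X q :=
  ⟨hg.1.comp hf.1, by rw [mk_compl_range_comp hg.1, hg.2, hf.2, add_eq_self hq]⟩

theorem nonempty_compl_range_of_mem_baerLeviSet (hq : q ≠ 0) (hf : f ∈ baerLeviSet X q) :
    (range f)ᶜ.Nonempty := by
  rwa [← nonempty_coe_sort, ← mk_ne_zero_iff, hf.2]

theorem baerLeviSet_nonempty (h : #X + q = #X) : (baerLeviSet X q).Nonempty := by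
  obtain ⟨e⟩ : Nonempty (X ⊕ q.out ≃ X) := Cardinal.eq.1 (by simpa using h)
  refine ⟨e ∘ Sum.inl, e.injective.comp Sum.inl_injective, ?_⟩
  rw [mk_compl_range_comp e.injective, e.range_eq_univ, compl_range_inl,
    mk_range_eq _ Sum.inr_injective]
  simp

theorem mk_mem_baerLeviRho :
    (f, g) ∈ baerLeviRho X ↔ ((range f)ᶜ ∩ (range g)ᶜ).Nonempty :=
  Iff.rfl

theorem mem_baerLeviRho_symm (h : (f, g) ∈ baerLeviRho X) : (g, f) ∈ baerLeviRho X := by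
  rwa [mk_mem_baerLeviRho, inter_comm]

theorem self_mem_baerLeviRho (hf : (range f)ᶜ.Nonempty) : (f, f) ∈ baerLeviRho X := by
  rwa [mk_mem_baerLeviRho, inter_self]

theorem comp_mem_baerLeviRho (h : (f, g) ∈ baerLeviRho X) (f' g' : X → X) :
    (f ∘ f', g ∘ g') ∈ baerLeviRho X :=
  h.mono <| inter_subset_inter (compl_subset_compl.2 <| range_comp_subset_range f' f)
    (compl_subset_compl.2 <| range_comp_subset_range g' g)

theorem exists_baerLeviRho_not_trans (hq : ℵ₀ ≤ q) (hf : f ∈ baerLeviSet X q) :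
    ∃ g ∈ baerLeviSet X q, ∃ h ∈ baerLeviSet X q,
      (f, g) ∈ baerLeviRho X ∧ (g, h) ∈ baerLeviRho X ∧ (f, h) ∉ baerLeviRho X := by
  have hne : (range f)ᶜ.Nonempty :=
    nonempty_compl_range_of_mem_baerLeviSet (aleph0_pos.trans_le hq).ne' hf
  obtain ⟨h, h_inj, h_compl⟩ := exists_injective_compl_range_eq_image hf.1
  have h_mem : h ∈ baerLeviSet X q := ⟨h_inj, by rw [h_compl, mk_image_eq hf.1, hf.2]⟩
  have hff : (range (f ∘ f))ᶜ = (range f)ᶜ ∪ (range h)ᶜ := by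
    rw [h_compl, compl_range_comp_of_injective hf.1]
  refine ⟨f ∘ f, comp_mem_baerLeviSet hq hf hf, h, h_mem, ?_, ?_, ?_⟩
  · rwa [mk_mem_baerLeviRho, hff, inter_eq_left.2 subset_union_left]
  · rw [mk_mem_baerLeviRho, hff, inter_eq_right.2 subset_union_right, h_compl]
    exact hne.image f
  · rw [mk_mem_baerLeviRho, h_compl, ← not_disjoint_iff_nonempty_inter, not_not]
    exact disjoint_compl_range_image f _

end BaerLevi

/-- for infinite cardinals `p = #X ≥ q`, the generalized
Baer--Levi semigroup `B(p, q)` is a subsemigroup of the monoid of self-maps of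
`X` under composition (here the product `f · g` is "first `f`, then `g`", i.e.
`g ∘ f`), and the relation `ρ` is a diagonal subsemigroup of
`B(p, q) × B(p, q)` which is symmetric but not transitive; in particular
`B(p, q)` is not DSC. -/
theorem baerLevi_not_DSC {X : Type u} {q : Cardinal.{u}}
    (hp : ℵ₀ ≤ #X) (hq : ℵ₀ ≤ q) (hqp : q ≤ #X) :
    (∀ f g : X → X, f ∈ baerLeviSet X q → g ∈ baerLeviSet X q →
      (g ∘ f) ∈ baerLeviSet X q) ∧
    (∀ f : X → X, f ∈ baerLeviSet X q → ((f, f) : (X → X) × (X → X)) ∈ baerLeviRho X) ∧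
    (∀ p p' : (X → X) × (X → X),
      p.1 ∈ baerLeviSet X q → p.2 ∈ baerLeviSet X q →
      p'.1 ∈ baerLeviSet X q → p'.2 ∈ baerLeviSet X q →
      p ∈ baerLeviRho X → p' ∈ baerLeviRho X →
      ((p'.1 ∘ p.1, p'.2 ∘ p.2) : (X → X) × (X → X)) ∈ baerLeviRho X) ∧
    (∀ f g : X → X, ((f, g) : (X → X) × (X → X)) ∈ baerLeviRho X →
      ((g, f) : (X → X) × (X → X)) ∈ baerLeviRho X) ∧
    ¬ (∀ f g h : X → X,
        f ∈ baerLeviSet X q → g ∈ baerLeviSet X q → h ∈ baerLeviSet X q →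
        ((f, g) : (X → X) × (X → X)) ∈ baerLeviRho X →
        ((g, h) : (X → X) × (X → X)) ∈ baerLeviRho X →
        ((f, h) : (X → X) × (X → X)) ∈ baerLeviRho X) := by
  refine ⟨fun f g hf hg ↦ comp_mem_baerLeviSet hq hg hf, fun f hf ↦ ?_,
    fun p p' _ _ _ _ _ hp' ↦ comp_mem_baerLeviRho hp' p.1 p.2,
    fun f g hfg ↦ mem_baerLeviRho_symm hfg, fun htrans ↦ ?_⟩
  · have hq₀ : q ≠ 0 := (aleph0_pos.trans_le hq).ne'
    exact self_mem_baerLeviRho (nonempty_compl_range_of_mem_baerLeviSet hq₀ hf)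
  · obtain ⟨f, hf⟩ : (baerLeviSet X q).Nonempty := baerLeviSet_nonempty (add_eq_left hp hqp)
    obtain ⟨g, hg, h, hh, hfg, hgh, hfh⟩ := exists_baerLeviRho_not_trans hq hf
    exact hfh (htrans f g h hf hg hh hfg hgh)
end

section
/- Let S be a semigroup and a ∈ S, and let S' denote the semigroup on the same underlying set as S with multiplication x ∘ y = x·a·y (which is associative). If S' is DSC, then S is DSC. -/
theorem sandwich_DSC_general {S : Type*} [Mul S] (a : S)
    (h : IsDSCOf (fun x y : S => x * a * y)) :
    IsDSCOf (fun x y : S => x * y) := by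
  intro ρ diag_mem mul_mem
  have sandwich_mem (p q : S × S) (hp : p ∈ ρ) (hq : q ∈ ρ) : p * (a, a) * q ∈ ρ :=
    mul_mem (p * (a, a)) q (mul_mem p (a, a) hp (diag_mem a)) hq
  exact h ρ diag_mem sandwich_mem

/-- for a semigroup `S` and `a ∈ S`, if the semigroup on the
same underlying set with the (associative) sandwich multiplication
`x ∘ y = x * a * y` is DSC, then `S` itself is DSC. -/
theorem sandwich_DSC {S : Type*} [Semigroup S] (a : S)
    (h : IsDSCOf (fun x y : S => x * a * y)) :
    IsDSCOf (fun x y : S => x * y) :=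
  sandwich_DSC_general a h
end

section
/- There exists a semigroup S such that S is DSC but S is not a group (i.e., it is not the case that S has an identity element with respect to which every element has a two-sided inverse). -/
/-- A semigroup is a group if it has a (two-sided) identity element with
respect to which every element has a two-sided inverse. -/
def IsGroupOf {S : Type*} (mul : S → S → S) : Prop :=
  ∃ e : S, (∀ s : S, mul e s = s ∧ mul s e = s) ∧
    ∀ s : S, ∃ t : S, mul s t = e ∧ mul t s = e

/-!
If the two-sided translations `s ↦ x * s * z` of a semigroup carry every pair of distinct elements
to every pair of elements, then a diagonal subsemigroup containing a single off-diagonal pair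
contains all pairs. So such a semigroup is DSC, and if it is nontrivial it is not cancellative, as
`a ≠ b` can be sent to equal elements; in particular it is not a group.

The germs at infinity of maps `ℕ → ℕ` tending to infinity, under composition, have this property.
If the germs of `a` and `b` differ, there is a sequence `z` along which all the values `a (z i)` and
`b (z j)` are distinct, and a map `x` may be prescribed freely at these values.
-/

open Filter Function

section SandwichTransitive

/-- The two-sided translations `s ↦ x * s * z` of `S` carry any pair of distinct elements to any
pair of elements. This is the property that forces diagonal subsemigroups to be trivial. -/
def IsSandwichTransitive (S : Type*) [Mul S] : Prop :=
  ∀ a b : S, a ≠ b → ∀ c d : S, ∃ x z : S, x * a * z = c ∧ x * b * z = d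

theorem IsSandwichTransitive.eq_top_of_mem_of_ne {S : Type*} [Mul S] (h : IsSandwichTransitive S)
    {ρ : Subsemigroup (S × S)} (hdiag : ∀ x, (x, x) ∈ ρ) {a b : S} (hab : (a, b) ∈ ρ)
    (hne : a ≠ b) : ρ = ⊤ := by
  refine (Subsemigroup.eq_top_iff' ρ).2 fun ⟨c, d⟩ ↦ ?_
  obtain ⟨x, z, rfl, rfl⟩ := h a b hne c d
  exact mul_mem (mul_mem (hdiag x) hab) (hdiag z)

theorem IsSandwichTransitive.isDSCOf {S : Type*} [Mul S] (h : IsSandwichTransitive S) :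
    IsDSCOf fun x y : S ↦ x * y := by
  intro ρ hdiag hmul
  have mem_of_ne {a b : S} (hab : (a, b) ∈ ρ) (hne : a ≠ b) (p : S × S) : p ∈ ρ := by
    have htop := h.eq_top_of_mem_of_ne (ρ := ⟨ρ, hmul _ _⟩) hdiag hab hne
    exact (Subsemigroup.eq_top_iff' _).1 htop p
  refine ⟨fun x y hxy ↦ ?_, fun x y z hxy hyz ↦ ?_⟩
  all_goals
    obtain rfl | hne := eq_or_ne x y
    · assumption
    · exact mem_of_ne hxy hne _

theorem IsGroupOf.isCancelMul {S : Type*} [Semigroup S] (h : IsGroupOf fun x y : S ↦ x * y) :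
    IsCancelMul S := by
  obtain ⟨e, (he : ∀ s, e * s = s ∧ s * e = s), (hinv : ∀ s, ∃ t, s * t = e ∧ t * s = e)⟩ := h
  refine { mul_left_cancel := fun s a b hab ↦ ?_, mul_right_cancel := fun s a b hab ↦ ?_ }
  · obtain ⟨t, -, hts⟩ := hinv s
    rw [← (he a).1, ← (he b).1, ← hts, mul_assoc, mul_assoc]
    exact congrArg (t * ·) hab
  · obtain ⟨t, hst, -⟩ := hinv s
    rw [← (he a).2, ← (he b).2, ← hst, ← mul_assoc, ← mul_assoc]
    exact congrArg (· * t) hab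

theorem IsSandwichTransitive.not_isCancelMul {S : Type*} [Mul S] [Nontrivial S]
    (h : IsSandwichTransitive S) : ¬ IsCancelMul S := by
  intro _
  obtain ⟨a, b, hne⟩ := exists_pair_ne S
  obtain ⟨x, z, hxaz, hxbz⟩ := h a b hne a a
  exact hne (mul_left_cancel (mul_right_cancel (hxaz.trans hxbz.symm)))

theorem IsSandwichTransitive.not_isGroupOf {S : Type*} [Semigroup S] [Nontrivial S]
    (h : IsSandwichTransitive S) : ¬ IsGroupOf fun x y : S ↦ x * y :=
  fun hG ↦ h.not_isCancelMul hG.isCancelMul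

end SandwichTransitive

section Cofinite

variable {α β γ ι κ : Type*}

theorem tendsto_sumElim_cofinite {l : Filter γ} {f : ι → γ} {g : κ → γ}
    (hf : Tendsto f cofinite l) (hg : Tendsto g cofinite l) :
    Tendsto (Sum.elim f g) cofinite l := by
  intro s hs
  have hfs : (f ⁻¹' s)ᶜ.Finite := hf hs
  have hgs : (g ⁻¹' s)ᶜ.Finite := hg hs
  refine ((hfs.image Sum.inl).union (hgs.image Sum.inr)).subset ?_
  rintro (i | k) h
  · exact Or.inl ⟨i, h, rfl⟩
  · exact Or.inr ⟨k, h, rfl⟩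

theorem tendsto_extend_cofinite {l : Filter γ} {f : ι → γ} {g : β → γ} (u : ι → β)
    (hf : Tendsto f cofinite l) (hg : Tendsto g cofinite l) :
    Tendsto (extend u f g) cofinite l := by
  classical
  intro s hs
  have hfs : (f ⁻¹' s)ᶜ.Finite := hf hs
  have hgs : (g ⁻¹' s)ᶜ.Finite := hg hs
  refine ((hfs.image u).union hgs).subset fun y hy ↦ ?_
  by_cases h : ∃ i, u i = y
  · rw [Set.mem_compl_iff, Set.mem_preimage, extend_def, dif_pos h] at hy
    exact Or.inl ⟨_, hy, h.choose_spec⟩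
  · rw [Set.mem_compl_iff, Set.mem_preimage, extend_apply' f g y h] at hy
    exact Or.inr hy

theorem exists_injective_sumElim_comp [Countable ι] {l : Filter α} {a b : α → β}
    (ha : Tendsto a l cofinite) (hb : Tendsto b l cofinite) (hab : ∃ᶠ x in l, a x ≠ b x) :
    ∃ z : ι → α, Injective (Sum.elim (a ∘ z) (b ∘ z)) := by
  let NoCommonValue (x y : α) : Prop := (a x ≠ a y ∧ b x ≠ b y) ∧ a x ≠ b y ∧ b x ≠ a y
  have : Std.Symm NoCommonValue :=
    ⟨fun _ _ ⟨⟨haa, hbb⟩, hab, hba⟩ ↦ ⟨⟨haa.symm, hbb.symm⟩, hba.symm, hab.symm⟩⟩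
  have eventually_noCommonValue (x : α) : ∀ᶠ y in l, NoCommonValue x y := by
    filter_upwards [ha.eventually (eventually_cofinite_ne (a x)),
      hb.eventually (eventually_cofinite_ne (b x)), hb.eventually (eventually_cofinite_ne (a x)),
      ha.eventually (eventually_cofinite_ne (b x))] with y haa hbb hab hba
    exact ⟨⟨haa.symm, hbb.symm⟩, hab.symm, hba.symm⟩
  obtain ⟨z, hne, hz⟩ := exists_seq_of_forall_finset_exists' (fun x ↦ a x ≠ b x) NoCommonValue
    fun s _ ↦ (hab.and_eventually <|
      (eventually_all_finset s).2 fun x _ ↦ eventually_noCommonValue x).exists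
  have haz : Injective (a ∘ z) := injective_iff_pairwise_ne.2 fun _ _ hij ↦ (hz hij).1.1
  have hbz : Injective (b ∘ z) := injective_iff_pairwise_ne.2 fun _ _ hij ↦ (hz hij).1.2
  have habz (i j : ℕ) : a (z i) ≠ b (z j) := by
    obtain rfl | hij := eq_or_ne i j
    · exact hne i
    · exact (hz hij).2.1
  obtain ⟨e, he⟩ := exists_injective_nat ι
  exact ⟨z ∘ e, (haz.comp he).sumElim (hbz.comp he) fun i j ↦ habz (e i) (e j)⟩

theorem exists_tendsto_comp_comp_eq [Countable γ] {a b : α → β} (ha : Tendsto a cofinite cofinite)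
    (hb : Tendsto b cofinite cofinite) (hab : ∃ᶠ x in cofinite, a x ≠ b x) {c d : γ → β}
    (hc : Tendsto c cofinite cofinite) (hd : Tendsto d cofinite cofinite) :
    ∃ (x : β → β) (z : γ → α), Tendsto x cofinite cofinite ∧ Tendsto z cofinite cofinite ∧
      x ∘ a ∘ z = c ∧ x ∘ b ∘ z = d := by
  obtain ⟨z, hu⟩ := exists_injective_sumElim_comp (ι := γ) ha hb hab
  have haz : Injective (a ∘ z) := (Sum.elim_injective.1 hu).1
  refine ⟨extend (Sum.elim (a ∘ z) (b ∘ z)) (Sum.elim c d) id, z,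
    tendsto_extend_cofinite _ (tendsto_sumElim_cofinite hc hd) tendsto_id,
    haz.of_comp.tendsto_cofinite, ?_, ?_⟩
  · exact funext fun n ↦ hu.extend_apply (Sum.elim c d) id (Sum.inl n)
  · exact funext fun n ↦ hu.extend_apply (Sum.elim c d) id (Sum.inr n)

end Cofinite

/-- The germs along `l` of the self-maps of `α` that tend to `l` along `l`, which form a semigroup
under composition. For `l = cofinite` on `ℕ` these are the germs at infinity of maps tending to
infinity. -/
def TendstoGerm {α : Type*} (l : Filter α) : Type _ :=
  {f : l.Germ α // f.Tendsto l}

namespace TendstoGerm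

variable {α : Type*} {l : Filter α}

/-- The germ of a map tending to `l` along `l`. -/
def mk (f : α → α) (hf : Tendsto f l l) : TendstoGerm l :=
  ⟨f, hf⟩

theorem mk_eq_mk {f g : α → α} {hf : Tendsto f l l} {hg : Tendsto g l l} :
    mk f hf = mk g hg ↔ f =ᶠ[l] g :=
  Subtype.ext_iff.trans Germ.coe_eq

theorem exists_eq_mk (p : TendstoGerm l) : ∃ f hf, p = mk f hf := by
  obtain ⟨f, hf⟩ := p
  induction f using Germ.inductionOn with
  | h f => exact ⟨f, hf, rfl⟩

instance : Mul (TendstoGerm l) where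
  mul p q := ⟨p.1.compTendsto' q.1 q.2, by
    obtain ⟨f, hf, rfl⟩ := p.exists_eq_mk
    obtain ⟨g, hg, rfl⟩ := q.exists_eq_mk
    exact hf.comp hg⟩

theorem mk_mul_mk {f g : α → α} (hf : Tendsto f l l) (hg : Tendsto g l l) :
    mk f hf * mk g hg = mk (f ∘ g) (hf.comp hg) :=
  rfl

instance : Semigroup (TendstoGerm l) where
  mul_assoc p q r := by
    obtain ⟨f, hf, rfl⟩ := p.exists_eq_mk
    obtain ⟨g, hg, rfl⟩ := q.exists_eq_mk
    obtain ⟨h, hh, rfl⟩ := r.exists_eq_mk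
    simp only [mk_mul_mk, comp_assoc]

theorem isSandwichTransitive_cofinite [Countable α] :
    IsSandwichTransitive (TendstoGerm (cofinite : Filter α)) := by
  intro p q hpq r s
  obtain ⟨a, ha, rfl⟩ := p.exists_eq_mk
  obtain ⟨b, hb, rfl⟩ := q.exists_eq_mk
  obtain ⟨c, hc, rfl⟩ := r.exists_eq_mk
  obtain ⟨d, hd, rfl⟩ := s.exists_eq_mk
  have hab : ∃ᶠ x in cofinite, a x ≠ b x := not_eventually.1 (mt mk_eq_mk.2 hpq)
  obtain ⟨x, z, hx, hz, rfl, rfl⟩ := exists_tendsto_comp_comp_eq ha hb hab hc hd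
  exact ⟨mk x hx, mk z hz, rfl, rfl⟩

instance : Nontrivial (TendstoGerm (cofinite : Filter ℕ)) := by
  have hsucc : Tendsto Nat.succ cofinite cofinite := Nat.succ_injective.tendsto_cofinite
  refine ⟨mk id tendsto_id, mk Nat.succ hsucc, fun h ↦ ?_⟩
  obtain ⟨n, hn⟩ := (mk_eq_mk.1 h).exists
  exact n.succ_ne_self hn.symm

end TendstoGerm

/-- there exists a semigroup which is DSC but not a group. -/
theorem exists_nongroup_DSC :
    ∃ (S : Type) (mul : S → S → S),
      (∀ x y z : S, mul (mul x y) z = mul x (mul y z)) ∧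
      IsDSCOf mul ∧ ¬ IsGroupOf mul :=
  ⟨TendstoGerm (cofinite : Filter ℕ), (· * ·), mul_assoc,
    TendstoGerm.isSandwichTransitive_cofinite.isDSCOf,
    TendstoGerm.isSandwichTransitive_cofinite.not_isGroupOf⟩
end

section
/- There exists a DSC semigroup S having a subsemigroup T ⊆ S such that T (with the induced multiplication) is not DSC; hence the class of DSC semigroups is not closed under taking subsemigroups. -/
theorem IsDSCOf.of_surjective_s19 {S T : Type*} {mulS : S → S → S} {mulT : T → T → T}
    (hS : IsDSCOf mulS) {f : S → T} (hf : Function.Surjective f)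
    (hf_mul : ∀ x y, f (mulS x y) = mulT (f x) (f y)) : IsDSCOf mulT := by
  intro ρ diag mul_mem
  obtain ⟨symm, trans⟩ := hS (Prod.map f f ⁻¹' ρ) (fun x => diag (f x)) fun _ _ hp hq => by
    simpa only [Set.mem_preimage, Prod.map_apply, Prod.map_fst, Prod.map_snd, hf_mul]
      using mul_mem _ _ hp hq
  exact ⟨hf.forall₂.2 symm, hf.forall₃.2 trans⟩

section Group

variable {G : Type*} [Group G] {ρ : Subsemigroup (G × G)}

theorem trans_mem_of_diagonal_mem (diag : ∀ g, (g, g) ∈ ρ) {x y z : G}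
    (hxy : (x, y) ∈ ρ) (hyz : (y, z) ∈ ρ) : (x, z) ∈ ρ := by
  simpa using ρ.mul_mem (ρ.mul_mem hxy (diag y⁻¹)) hyz

theorem swap_mem_of_diagonal_mem_of_isConj_inv (diag : ∀ g, (g, g) ∈ ρ) {x y : G}
    (hconj : IsConj (x⁻¹ * y) (x⁻¹ * y)⁻¹) (hxy : (x, y) ∈ ρ) : (y, x) ∈ ρ := by
  obtain ⟨c, hc⟩ := isConj_iff.1 hconj
  have one_div : (1, x⁻¹ * y) ∈ ρ := by
    simpa using ρ.mul_mem (diag x⁻¹) hxy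
  have one_div_inv : (1, (x⁻¹ * y)⁻¹) ∈ ρ := by
    rw [← hc]
    simpa using ρ.mul_mem (ρ.mul_mem (diag c) one_div) (diag c⁻¹)
  simpa using ρ.mul_mem (diag y) one_div_inv

theorem isDSCOf_mul_of_isConj_inv (h : ∀ g : G, IsConj g g⁻¹) :
    IsDSCOf fun x y : G => x * y := by
  intro ρ diag mul_mem
  let ρ' : Subsemigroup (G × G) := ⟨ρ, mul_mem _ _⟩
  exact ⟨fun _ _ => swap_mem_of_diagonal_mem_of_isConj_inv (ρ := ρ') diag (h _),
    fun _ _ _ => trans_mem_of_diagonal_mem (ρ := ρ') diag⟩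

end Group

theorem not_isDSCOf_mul_of_lt {M : Type*} [Mul M] [Preorder M] [MulLeftMono M] [MulRightMono M]
    {a b : M} (hab : a < b) : ¬ IsDSCOf fun x y : M => x * y := by
  intro h
  have ge_of_le : ∀ x y : M, x ≤ y → y ≤ x :=
    (h {p | p.1 ≤ p.2} (fun _ => le_rfl) fun _ _ => mul_le_mul').1
  exact hab.not_ge (ge_of_le a b hab.le)

theorem not_isDSCOf_powers {M : Type*} [Monoid M] {x : M}
    (hx : Function.Injective fun k : ℕ => x ^ k) :
    ¬ IsDSCOf fun a b : Submonoid.powers x => a * b := by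
  classical
  let e : Multiplicative ℕ ≃* Submonoid.powers x := Submonoid.powLogEquiv hx
  have one_lt : (1 : Multiplicative ℕ) < Multiplicative.ofAdd 1 := Multiplicative.ofAdd_lt.2 one_pos
  exact fun h => not_isDSCOf_mul_of_lt one_lt (h.of_surjective_s19 e.symm.surjective (map_mul e.symm))

theorem dihedralGroup_isConj_inv {n : ℕ} (g : DihedralGroup n) : IsConj g g⁻¹ := by
  cases g with
  | r i => exact isConj_iff.2 ⟨DihedralGroup.sr 0, by simp⟩
  | sr i => rw [DihedralGroup.inv_sr]

theorem dihedralGroup_zero_injective_pow_r_one :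
    Function.Injective fun k : ℕ => (DihedralGroup.r 1 : DihedralGroup 0) ^ k :=
  injective_pow_iff_not_isOfFinOrder.2 (orderOf_eq_zero_iff.1 DihedralGroup.orderOf_r_one)

/-- there exists a DSC semigroup `S` with a (nonempty,
multiplicatively closed) subsemigroup `T ⊆ S` such that `T`, with the induced
multiplication, is not DSC. -/
theorem exists_DSC_with_nonDSC_subsemigroup :
    ∃ (S : Type) (mul : S → S → S),
      (∀ x y z : S, mul (mul x y) z = mul x (mul y z)) ∧
      IsDSCOf mul ∧
      ∃ (T : Set S) (_ : T.Nonempty)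
        (hT : ∀ x ∈ T, ∀ y ∈ T, mul x y ∈ T),
        ¬ IsDSCOf (fun a b : T => (⟨mul a b, hT a a.2 b b.2⟩ : T)) := by
  let T : Submonoid (DihedralGroup 0) := .powers (.r 1)
  exact ⟨DihedralGroup 0, (· * ·), mul_assoc, isDSCOf_mul_of_isConj_inv dihedralGroup_isConj_inv,
    T, ⟨1, T.one_mem⟩, fun _ hx _ hy => T.mul_mem hx hy,
    not_isDSCOf_powers dihedralGroup_zero_injective_pow_r_one⟩
end
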